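/- The set α = {(1/6, 3/4), (5/6, 3/4)} is an optimal set of two-means for P, and the second quantization error is V₂ = 31/288; that is, for every set β ⊂ ℝ² with card(β) ≤ 2, ∫ min_{c∈β} ‖x−c‖² dP ≥ 31/288, with equality for α. -/

import Mathlib

open MeasureTheory ProbabilityTheory
open scoped ENNReal

noncomputable section

abbrev E2 : Type := EuclideanSpace ℝ (Fin 2)

/-- The point (a,b) of the Euclidean plane. -/
def pt (a b : ℝ) : E2 := (WithLp.equiv 2 (Fin 2 → ℝ)).symm ![a, b]

/-- The four generating similarities S₁,…,S₄ (indexed 0,…,3) of the Sierpiński carpet. -/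
def S : Fin 4 → E2 → E2
  | 0 => fun x => pt (x 0 / 3) (x 1 / 3)
  | 1 => fun x => pt (x 0 / 3 + 2/3) (x 1 / 3)
  | 2 => fun x => pt (x 0 / 3) (x 1 / 3 + 2/3)
  | 3 => fun x => pt (x 0 / 3 + 2/3) (x 1 / 3 + 2/3)

/-- The self-affinity equation P = (1/8)P∘S₁⁻¹ + (1/8)P∘S₂⁻¹ + (3/8)P∘S₃⁻¹ + (3/8)P∘S₄⁻¹. -/
def carpetEq (P : Measure E2) : Prop :=
  P = (1/8 : ℝ≥0∞) • P.map (S 0) + (1/8 : ℝ≥0∞) • P.map (S 1)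
    + (3/8 : ℝ≥0∞) • P.map (S 2) + (3/8 : ℝ≥0∞) • P.map (S 3)

/-- The unit square [0,1]². -/
def unitSq : Set E2 := {x | ∀ i, x i ∈ Set.Icc (0:ℝ) 1}

/-- S_ω = S_{ω₁} ∘ ⋯ ∘ S_{ω_k} for a word ω. -/
def Sw (w : List (Fin 4)) : E2 → E2 := fun x => w.foldr S x

/-- The basic square J_ω = S_ω([0,1]²). -/
def Jw (w : List (Fin 4)) : Set E2 := Sw w '' unitSq

/-- The basic square J_i of the first level. -/
def Jset (i : Fin 4) : Set E2 := S i '' unitSq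

/-- The mass centroid (conditional expectation) of P on a set A. -/
def ctr (P : Measure E2) (A : Set E2) : E2 := (P A).toReal⁻¹ • ∫ x in A, x ∂P

/-- E(ω) : distortion error on J_ω about its centroid a(ω) = S_ω(1/2,3/4). -/
def Err (P : Measure E2) (w : List (Fin 4)) : ℝ :=
  ∫ x in Jw w, ‖x - Sw w (pt (1/2) (3/4))‖^2 ∂P

/-- E(ωi, ωj) : distortion error on J_{ωi} ∪ J_{ωj} about its centroid. -/
def Epair (P : Measure E2) (w : List (Fin 4)) (i j : Fin 4) : ℝ :=
  ∫ x in (Jw (w ++ [i]) ∪ Jw (w ++ [j])),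
    ‖x - ctr P (Jw (w ++ [i]) ∪ Jw (w ++ [j]))‖^2 ∂P


def uL (w : ℝ) : ℝ := min (-w/6) (1/6 - w/2)
def uR (w : ℝ) : ℝ := min (w/2) (1/6 + w/6)
def tB (w : ℝ) : ℝ := min (-5*w/12) (1/4 - 3*w/4)
def tT (w : ℝ) : ℝ := min (w/4) (1/4 - w/12)

lemma uL_cases (w : ℝ) : (w ≤ 1/2 → uL w = -w/6) ∧ (1/2 ≤ w → uL w = 1/6 - w/2) := by
  refine ⟨fun h => min_eq_left (by linarith), fun h => min_eq_right (by linarith)⟩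
lemma uR_cases (w : ℝ) : (w ≤ 1/2 → uR w = w/2) ∧ (1/2 ≤ w → uR w = 1/6 + w/6) := by
  refine ⟨fun h => min_eq_left (by linarith), fun h => min_eq_right (by linarith)⟩
lemma tB_cases (w : ℝ) : (w ≤ 3/4 → tB w = -5*w/12) ∧ (3/4 ≤ w → tB w = 1/4 - 3*w/4) := by
  refine ⟨fun h => min_eq_left (by linarith), fun h => min_eq_right (by linarith)⟩
lemma tT_cases (w : ℝ) : (w ≤ 3/4 → tT w = w/4) ∧ (3/4 ≤ w → tT w = 1/4 - w/12) := by
  refine ⟨fun h => min_eq_left (by linarith), fun h => min_eq_right (by linarith)⟩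

/-- Piecewise-linear profile of a cell on each of the three intervals cut out by 1/2 and 3/4. -/
lemma three_pieces {u t u1 u2 t1 t2 w : ℝ}
    (hu : (w ≤ 1/2 → u = u1) ∧ (1/2 ≤ w → u = u2))
    (ht : (w ≤ 3/4 → t = t1) ∧ (3/4 ≤ w → t = t2)) (h0 : 0 ≤ w) (h1 : w ≤ 1) :
    (0 ≤ w ∧ 0 ≤ 1/2 - w ∧ u = u1 ∧ t = t1) ∨
    (0 ≤ w - 1/2 ∧ 0 ≤ 3/4 - w ∧ u = u2 ∧ t = t1) ∨
    (0 ≤ w - 3/4 ∧ 0 ≤ 1 - w ∧ u = u2 ∧ t = t2) := by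
  rcases le_total w (1/2) with h | h
  · exact Or.inl ⟨h0, by linarith, hu.1 h, ht.1 (by linarith)⟩
  · rcases le_total w (3/4) with h' | h'
    · exact Or.inr (Or.inl ⟨by linarith, by linarith, hu.2 h, ht.1 h'⟩)
    · exact Or.inr (Or.inr ⟨by linarith, by linarith, hu.2 h, ht.2 h'⟩)

lemma coreA (x y : ℝ) (hx0 : 0 ≤ x) (hx1 : x ≤ 1) (hy0 : 0 ≤ y) (hy1 : y ≤ 1) :
    (1/8 * uR x + 3/8 * uL y + 1/8)^2 + (1/8 * tB x + 3/8 * tT y + 1/16)^2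
      ≤ (1/8*x + 3/8*y + 3/8) * (1 - (1/8*x + 3/8*y + 3/8)) / 9 := by
  rcases three_pieces (uR_cases x) (tB_cases x) hx0 hx1 with ⟨a, b, e1, e2⟩ | ⟨a, b, e1, e2⟩ | ⟨a, b, e1, e2⟩ <;>
  rcases three_pieces (uL_cases y) (tT_cases y) hy0 hy1 with ⟨c, d, e3, e4⟩ | ⟨c, d, e3, e4⟩ | ⟨c, d, e3, e4⟩ <;>
  · rw [e1, e2, e3, e4]
    nlinarith [mul_nonneg a b, mul_nonneg a c, mul_nonneg a d, mul_nonneg b c, mul_nonneg b d, mul_nonneg c d]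

lemma coreB (x y : ℝ) (hx0 : 0 ≤ x) (hx1 : x ≤ 1) (hy0 : 0 ≤ y) (hy1 : y ≤ 1) :
    (1/8 * uL x + 3/8 * uL y + 1/6)^2 + (1/8 * tB x + 3/8 * tT y + 0)^2
      ≤ (1/8*x + 3/8*y + 1/2) * (1 - (1/8*x + 3/8*y + 1/2)) / 9 := by
  rcases three_pieces (uL_cases x) (tB_cases x) hx0 hx1 with ⟨a, b, e1, e2⟩ | ⟨a, b, e1, e2⟩ | ⟨a, b, e1, e2⟩ <;>
  rcases three_pieces (uL_cases y) (tT_cases y) hy0 hy1 with ⟨c, d, e3, e4⟩ | ⟨c, d, e3, e4⟩ | ⟨c, d, e3, e4⟩ <;>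
  · rw [e1, e2, e3, e4]
    nlinarith [mul_nonneg a b, mul_nonneg a c, mul_nonneg a d, mul_nonneg b c, mul_nonneg b d, mul_nonneg c d]

lemma coreC (x y : ℝ) (hx0 : 0 ≤ x) (hx1 : x ≤ 1) (hy0 : 0 ≤ y) (hy1 : y ≤ 1) :
    (1/8 * uR x + 3/8 * uR y)^2 + (1/8 * tB x + 3/8 * tT y)^2
      ≤ (1/8*x + 3/8*y) * (1 - (1/8*x + 3/8*y)) / 9 := by
  rcases three_pieces (uR_cases x) (tB_cases x) hx0 hx1 with ⟨a, b, e1, e2⟩ | ⟨a, b, e1, e2⟩ | ⟨a, b, e1, e2⟩ <;>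
  rcases three_pieces (uR_cases y) (tT_cases y) hy0 hy1 with ⟨c, d, e3, e4⟩ | ⟨c, d, e3, e4⟩ | ⟨c, d, e3, e4⟩ <;>
  · rw [e1, e2, e3, e4]
    nlinarith [mul_nonneg a b, mul_nonneg a c, mul_nonneg a d, mul_nonneg b c, mul_nonneg b d, mul_nonneg c d]

lemma two_le_of_sq {D0 D1 U T q : ℝ} (hq : 0 ≤ q) (h : U^2 + T^2 ≤ q/9) :
    2 * (D0 * U + D1 * T) - q * (D0^2 + D1^2) ≤ 1/9 := by
  have h1 : (D0 * U + D1 * T)^2 ≤ (D0^2 + D1^2) * (q/9) := by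
    have : (D0 * U + D1 * T)^2 ≤ (D0^2 + D1^2) * (U^2 + T^2) := by
      nlinarith [sq_nonneg (D0 * T - D1 * U)]
    exact this.trans (mul_le_mul_of_nonneg_left h (by positivity))
  have h2 : 2 * (D0 * U + D1 * T) ≤ q * (D0^2 + D1^2) + 1/9 := by
    apply le_of_sq_le_sq _ (by positivity)
    nlinarith [sq_nonneg (q * (D0^2 + D1^2) - 1/9)]
  linarith

@[simp] lemma pt_zero (a b : ℝ) : pt a b 0 = a := rfl
@[simp] lemma pt_one (a b : ℝ) : pt a b 1 = b := rfl

lemma continuous_pt {f g : E2 → ℝ} (hf : Continuous f) (hg : Continuous g) :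
    Continuous fun x => pt (f x) (g x) := by
  unfold pt
  refine (PiLp.continuous_toLp 2 (fun _ : Fin 2 => ℝ)).comp ?_
  refine continuous_pi fun i => ?_
  fin_cases i
  · exact hf
  · exact hg

lemma continuous_S (i : Fin 4) : Continuous (S i) := by
  fin_cases i <;> exact continuous_pt (by fun_prop) (by fun_prop)

lemma meas_S (i : Fin 4) : Measurable (S i) := (continuous_S i).measurable

/-- horizontal offset of a cell -/
def ox : Fin 4 → ℝ := ![0, 2/3, 0, 2/3]
/-- vertical offset of a cell -/
def oy : Fin 4 → ℝ := ![0, 0, 2/3, 2/3]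

lemma S_zero (i : Fin 4) (x : E2) : S i x 0 = x 0 / 3 + ox i := by
  fin_cases i <;> simp [S, ox]
lemma S_one (i : Fin 4) (x : E2) : S i x 1 = x 1 / 3 + oy i := by
  fin_cases i <;> simp [S, oy]

lemma S_mem (i : Fin 4) {x : E2} (hx : x ∈ unitSq) : S i x ∈ unitSq := by
  have h0 := hx 0
  have h1 := hx 1
  simp only [Set.mem_Icc] at h0 h1
  intro k
  fin_cases k <;> simp only [Fin.zero_eta, Fin.mk_one, S_zero, S_one, Set.mem_Icc] <;>
  fin_cases i <;> simp [ox, oy] <;> constructor <;> linarith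

lemma P_apply {P : Measure E2} (hP : carpetEq P) {A : Set E2} (hA : MeasurableSet A) :
    P A = 1/8 * P (S 0 ⁻¹' A) + 1/8 * P (S 1 ⁻¹' A) + 3/8 * P (S 2 ⁻¹' A) + 3/8 * P (S 3 ⁻¹' A) := by
  conv_lhs => rw [hP]
  simp only [Measure.add_apply, Measure.smul_apply, smul_eq_mul, Measure.map_apply (meas_S _) hA]

lemma weights : (1/8 + 1/8 + 3/8 + 3/8 : ℝ≥0∞) = 1 := by
  rw [← ENNReal.add_div, ← ENNReal.add_div, ← ENNReal.add_div]
  norm_num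
  exact ENNReal.div_self (by norm_num) (by norm_num)

lemma tail_zero {P : Measure E2} [IsProbabilityMeasure P] (hP : carpetEq P) {φ : E2 → ℝ}
    (hφ : Measurable φ) (h : ∀ i x, φ (S i x) ≤ φ x / 3) : ∀ᵐ x ∂P, φ x ≤ 0 := by
  have step : ∀ r : ℝ, P {x | r < φ x} ≤ P {x | 3 * r < φ x} := by
    intro r
    have hm : MeasurableSet {x | r < φ x} := measurableSet_lt measurable_const hφ
    rw [P_apply hP hm]
    have hi : ∀ i, S i ⁻¹' {x | r < φ x} ⊆ {x | 3 * r < φ x} := by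
      intro i x hx
      have h1 := h i x
      simp only [Set.mem_preimage, Set.mem_ofPred_eq] at hx ⊢
      linarith
    calc _ ≤ 1/8 * P {x | 3 * r < φ x} + 1/8 * P {x | 3 * r < φ x}
          + 3/8 * P {x | 3 * r < φ x} + 3/8 * P {x | 3 * r < φ x} := by
          gcongr <;> exact hi _
      _ = (1/8 + 1/8 + 3/8 + 3/8) * P {x | 3 * r < φ x} := by ring
      _ = _ := by rw [weights, one_mul]
  have iter : ∀ (r : ℝ) (n : ℕ), P {x | r < φ x} ≤ P {x | 3^n * r < φ x} := by
    intro r n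
    induction n with
    | zero => simp
    | succ k ih =>
      refine ih.trans ((step _).trans (le_of_eq ?_))
      congr 1; ext x; simp only [Set.mem_ofPred_eq]; rw [pow_succ]; ring_nf
  have zero : ∀ r : ℝ, 0 < r → P {x | r < φ x} = 0 := by
    intro r hr
    have ht : Filter.Tendsto (fun n : ℕ => P {x | (3:ℝ)^n * r < φ x}) Filter.atTop
        (nhds (P (⋂ n : ℕ, {x | (3:ℝ)^n * r < φ x}))) := by
      refine tendsto_measure_iInter_atTop
        (fun n => (measurableSet_lt measurable_const hφ).nullMeasurableSet) ?_
        ⟨0, measure_ne_top _ _⟩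
      intro m n hmn x hx
      simp only [Set.mem_ofPred_eq] at hx ⊢
      refine lt_of_le_of_lt ?_ hx
      gcongr
      norm_num
    have he : (⋂ n : ℕ, {x | (3:ℝ)^n * r < φ x}) = ∅ := by
      ext x
      simp only [Set.mem_iInter, Set.mem_ofPred_eq, Set.mem_empty_iff_false, iff_false, not_forall, not_lt]
      obtain ⟨n, hn⟩ := pow_unbounded_of_one_lt (φ x / r) (by norm_num : (1:ℝ) < 3)
      exact ⟨n, by rw [div_lt_iff₀ hr] at hn; exact hn.le⟩
    rw [he, measure_empty] at ht
    exact le_antisymm (ge_of_tendsto' ht (iter r)) (zero_le)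
  have hall : ∀ᵐ x ∂P, ∀ n : ℕ, φ x ≤ 1 / ((n:ℝ) + 1) := by
    rw [ae_all_iff]
    intro n
    have := zero (1 / ((n:ℝ) + 1)) (by positivity)
    rw [ae_iff]
    simpa only [not_le] using this
  filter_upwards [hall] with x hx
  exact ge_of_tendsto' tendsto_one_div_add_atTop_nhds_zero_nat hx

lemma coord_meas (k : Fin 2) : Measurable fun x : E2 => x k := by
  have : Continuous fun x : E2 => x k := by fun_prop
  exact this.measurable

lemma ae_unitSq {P : Measure E2} [IsProbabilityMeasure P] (hP : carpetEq P) :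
    ∀ᵐ x ∂P, x ∈ unitSq := by
  have h0 := tail_zero hP (φ := fun x => x 0 - 1) ((coord_meas 0).sub_const 1)
    (by intro i x; simp only [S_zero]; fin_cases i <;> simp [ox] <;> linarith)
  have h1 := tail_zero hP (φ := fun x => x 1 - 1) ((coord_meas 1).sub_const 1)
    (by intro i x; simp only [S_one]; fin_cases i <;> simp [oy] <;> linarith)
  have h2 := tail_zero hP (φ := fun x => - x 0) ((coord_meas 0).neg)
    (by intro i x; simp only [S_zero]; fin_cases i <;> simp [ox] <;> linarith)
  have h3 := tail_zero hP (φ := fun x => - x 1) ((coord_meas 1).neg)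
    (by intro i x; simp only [S_one]; fin_cases i <;> simp [oy] <;> linarith)
  filter_upwards [h0, h1, h2, h3] with x a b c d
  intro k
  fin_cases k
  · exact ⟨by simpa using c, by simpa using a⟩
  · exact ⟨by simpa using d, by simpa using b⟩

/-- Measurable functions bounded on the unit square. -/
def Good (f : E2 → ℝ) : Prop := Measurable f ∧ ∃ C, ∀ x ∈ unitSq, |f x| ≤ C

lemma Good.integrable {P : Measure E2} [IsProbabilityMeasure P] (hP : carpetEq P) {f : E2 → ℝ}
    (hf : Good f) : Integrable f P := by
  obtain ⟨hm, C, hC⟩ := hf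
  refine Integrable.of_bound hm.aestronglyMeasurable C ?_
  filter_upwards [ae_unitSq hP] with x hx
  exact hC x hx

lemma Good.comp_S {f : E2 → ℝ} (hf : Good f) (i : Fin 4) : Good fun x => f (S i x) :=
  ⟨hf.1.comp (meas_S i), hf.2.imp fun _ hC x hx => hC _ (S_mem i hx)⟩

lemma Good.add {f g : E2 → ℝ} (hf : Good f) (hg : Good g) : Good fun x => f x + g x := by
  obtain ⟨hm, C, hC⟩ := hf
  obtain ⟨hm', C', hC'⟩ := hg
  exact ⟨hm.add hm', C + C', fun x hx => (abs_add_le _ _).trans (add_le_add (hC x hx) (hC' x hx))⟩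

lemma Good.mul {f g : E2 → ℝ} (hf : Good f) (hg : Good g) : Good fun x => f x * g x := by
  obtain ⟨hm, C, hC⟩ := hf
  obtain ⟨hm', C', hC'⟩ := hg
  refine ⟨hm.mul hm', C * C', fun x hx => ?_⟩
  rw [abs_mul]
  exact mul_le_mul (hC x hx) (hC' x hx) (abs_nonneg _) ((abs_nonneg _).trans (hC x hx))

lemma Good.const (c : ℝ) : Good fun _ => c := ⟨measurable_const, |c|, fun _ _ => le_rfl⟩

lemma Good.sub {f g : E2 → ℝ} (hf : Good f) (hg : Good g) : Good fun x => f x - g x := by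
  have := hf.add ((Good.const (-1)).mul hg)
  convert this using 2
  ring

lemma Good.pow {f : E2 → ℝ} (hf : Good f) : Good fun x => f x ^ 2 := by
  simpa only [sq] using hf.mul hf

lemma Good.coord (k : Fin 2) : Good fun x => x k :=
  ⟨coord_meas k, 1, fun x hx => by have := hx k; rw [abs_of_nonneg this.1]; exact this.2⟩

lemma Good.min {f g : E2 → ℝ} (hf : Good f) (hg : Good g) : Good fun x => min (f x) (g x) := by
  obtain ⟨hm, C, hC⟩ := hf
  obtain ⟨hm', C', hC'⟩ := hg
  refine ⟨hm.min hm', max C C', fun x hx => abs_min_le_max_abs_abs.trans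
    (max_le_max (hC x hx) (hC' x hx))⟩

lemma carpet_integral {P : Measure E2} [IsProbabilityMeasure P] (hP : carpetEq P) {f : E2 → ℝ}
    (hf : Good f) : ∫ x, f x ∂P = 1/8 * ∫ x, f (S 0 x) ∂P + 1/8 * ∫ x, f (S 1 x) ∂P
      + 3/8 * ∫ x, f (S 2 x) ∂P + 3/8 * ∫ x, f (S 3 x) ∂P := by
  have hi : ∀ i, Integrable f (P.map (S i)) := fun i => by
    rw [integrable_map_measure hf.1.aestronglyMeasurable (meas_S i).aemeasurable]
    exact (hf.comp_S i).integrable hP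
  have h18 : (1/8 : ℝ≥0∞) ≠ ⊤ := ENNReal.div_ne_top (by norm_num) (by norm_num)
  have h38 : (3/8 : ℝ≥0∞) ≠ ⊤ := ENNReal.div_ne_top (by norm_num) (by norm_num)
  have j0 := (hi 0).smul_measure h18
  have j1 := (hi 1).smul_measure h18
  have j2 := (hi 2).smul_measure h38
  have j3 := (hi 3).smul_measure h38
  conv_lhs => rw [hP]
  rw [integral_add_measure ((j0.add_measure j1).add_measure j2) j3,
    integral_add_measure (j0.add_measure j1) j2, integral_add_measure j0 j1]
  simp only [integral_smul_measure]
  simp only [integral_map (meas_S _).aemeasurable hf.1.aestronglyMeasurable, smul_eq_mul]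
  norm_num

/-- General quadratic polynomial in the coordinates. -/
def poly (c0 c1 c2 c3 c4 c5 : ℝ) (x : E2) : ℝ :=
  c0 + c1 * x 0 + c2 * x 1 + c3 * (x 0)^2 + c4 * (x 1)^2 + c5 * (x 0 * x 1)

lemma int_poly {P : Measure E2} [IsProbabilityMeasure P] (hP : carpetEq P) (c0 c1 c2 c3 c4 c5 : ℝ) :
    ∫ x, poly c0 c1 c2 c3 c4 c5 x ∂P = c0 + c1 * ∫ x, x 0 ∂P + c2 * ∫ x, x 1 ∂P
      + c3 * ∫ x, (x 0)^2 ∂P + c4 * ∫ x, (x 1)^2 ∂P + c5 * ∫ x, x 0 * x 1 ∂P := by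
  have g0 : Good fun _ => c0 := Good.const c0
  have g1 : Good fun x => c1 * x 0 := (Good.const c1).mul (Good.coord 0)
  have g2 : Good fun x => c2 * x 1 := (Good.const c2).mul (Good.coord 1)
  have g3 : Good fun x => c3 * (x 0)^2 := (Good.const c3).mul (Good.coord 0).pow
  have g4 : Good fun x => c4 * (x 1)^2 := (Good.const c4).mul (Good.coord 1).pow
  have g5 : Good fun x => c5 * (x 0 * x 1) := (Good.const c5).mul ((Good.coord 0).mul (Good.coord 1))
  unfold poly
  rw [integral_add ((((g0.add g1).add g2).add g3).add g4 |>.integrable hP) (g5.integrable hP),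
    integral_add (((g0.add g1).add g2).add g3 |>.integrable hP) (g4.integrable hP),
    integral_add ((g0.add g1).add g2 |>.integrable hP) (g3.integrable hP),
    integral_add (g0.add g1 |>.integrable hP) (g2.integrable hP),
    integral_add (g0.integrable hP) (g1.integrable hP)]
  simp only [integral_const_mul, integral_const, probReal_univ, one_smul]

lemma int_S0 {P : Measure E2} [IsProbabilityMeasure P] (hP : carpetEq P) (i : Fin 4) :
    ∫ x, S i x 0 ∂P = (∫ x, x 0 ∂P) / 3 + ox i := by
  have h : (fun x => S i x 0) = poly (ox i) (1/3) 0 0 0 0 := by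
    funext x; simp only [S_zero, poly]; ring
  rw [h, int_poly hP]; ring

lemma int_S1 {P : Measure E2} [IsProbabilityMeasure P] (hP : carpetEq P) (i : Fin 4) :
    ∫ x, S i x 1 ∂P = (∫ x, x 1 ∂P) / 3 + oy i := by
  have h : (fun x => S i x 1) = poly (oy i) 0 (1/3) 0 0 0 := by
    funext x; simp only [S_one, poly]; ring
  rw [h, int_poly hP]; ring

lemma mean0 {P : Measure E2} [IsProbabilityMeasure P] (hP : carpetEq P) : ∫ x, x 0 ∂P = 1/2 := by
  have h := carpet_integral hP (Good.coord 0)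
  simp only [int_S0 hP, ox] at h
  simp at h
  linarith

lemma mean1 {P : Measure E2} [IsProbabilityMeasure P] (hP : carpetEq P) : ∫ x, x 1 ∂P = 3/4 := by
  have h := carpet_integral hP (Good.coord 1)
  simp only [int_S1 hP, oy] at h
  simp at h
  linarith

lemma sq0 {P : Measure E2} [IsProbabilityMeasure P] (hP : carpetEq P) : ∫ x, (x 0)^2 ∂P = 3/8 := by
  have h := carpet_integral hP (Good.coord 0).pow
  have e : ∀ i, ∫ x, (S i x 0)^2 ∂P = (ox i)^2 + 2/3 * ox i * (1/2) + 1/9 * ∫ x, (x 0)^2 ∂P := by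
    intro i
    have h : (fun x => (S i x 0)^2) = poly ((ox i)^2) (2/3 * ox i) 0 (1/9) 0 0 := by
      funext x; simp only [S_zero, poly]; ring
    rw [h, int_poly hP, mean0 hP]; ring
  simp only [e, ox] at h
  simp at h
  linarith

lemma sq1 {P : Measure E2} [IsProbabilityMeasure P] (hP : carpetEq P) : ∫ x, (x 1)^2 ∂P = 21/32 := by
  have h := carpet_integral hP (Good.coord 1).pow
  have e : ∀ i, ∫ x, (S i x 1)^2 ∂P = (oy i)^2 + 2/3 * oy i * (3/4) + 1/9 * ∫ x, (x 1)^2 ∂P := by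
    intro i
    have h : (fun x => (S i x 1)^2) = poly ((oy i)^2) 0 (2/3 * oy i) 0 (1/9) 0 := by
      funext x; simp only [S_one, poly]; ring
    rw [h, int_poly hP, mean1 hP]; ring
  simp only [e, oy] at h
  simp at h
  linarith

lemma cross {P : Measure E2} [IsProbabilityMeasure P] (hP : carpetEq P) :
    ∫ x, x 0 * x 1 ∂P = 3/8 := by
  have h := carpet_integral hP ((Good.coord 0).mul (Good.coord 1))
  have e : ∀ i, ∫ x, S i x 0 * S i x 1 ∂P
      = ox i * oy i + oy i / 6 + ox i / 4 + 1/9 * ∫ x, x 0 * x 1 ∂P := by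
    intro i
    have h : (fun x => S i x 0 * S i x 1) = poly (ox i * oy i) (oy i / 3) (ox i / 3) 0 0 (1/9) := by
      funext x; simp only [S_zero, S_one, poly]; ring
    rw [h, int_poly hP, mean0 hP, mean1 hP]; ring
  simp only [e, ox, oy] at h
  simp at h
  linarith

lemma int_poly' {P : Measure E2} [IsProbabilityMeasure P] (hP : carpetEq P) (c0 c1 c2 c3 c4 c5 : ℝ) :
    ∫ x, poly c0 c1 c2 c3 c4 c5 x ∂P
      = c0 + c1 * (1/2) + c2 * (3/4) + c3 * (3/8) + c4 * (21/32) + c5 * (3/8) := by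
  rw [int_poly hP, mean0 hP, mean1 hP, sq0 hP, sq1 hP, cross hP]

/-- Squared distance in coordinates. -/
def ds (a0 a1 : ℝ) (x : E2) : ℝ := (x 0 - a0)^2 + (x 1 - a1)^2

lemma norm_ds (x a : E2) : ‖x - a‖^2 = ds (a 0) (a 1) x := by
  rw [EuclideanSpace.norm_sq_eq]
  simp [ds, Fin.sum_univ_two]

lemma Good.ds (a0 a1 : ℝ) : Good (ds a0 a1) :=
  (((Good.coord 0).sub (Good.const a0)).pow).add (((Good.coord 1).sub (Good.const a1)).pow)

lemma Good.poly (c0 c1 c2 c3 c4 c5 : ℝ) : Good (poly c0 c1 c2 c3 c4 c5) :=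
  (((((Good.const c0).add ((Good.const c1).mul (Good.coord 0))).add
    ((Good.const c2).mul (Good.coord 1))).add ((Good.const c3).mul (Good.coord 0).pow)).add
    ((Good.const c4).mul (Good.coord 1).pow)).add
    ((Good.const c5).mul ((Good.coord 0).mul (Good.coord 1)))

lemma value_eq {P : Measure E2} [IsProbabilityMeasure P] (hP : carpetEq P) :
    ∫ x, min (ds (1/6) (3/4) x) (ds (5/6) (3/4) x) ∂P = 31/288 := by
  rw [carpet_integral hP ((Good.ds _ _).min (Good.ds _ _))]
  have key : ∀ i, ∀ c : ℝ, (∀ x ∈ unitSq, min (ds (1/6) (3/4) (S i x)) (ds (5/6) (3/4) (S i x))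
        = ds c (3/4) (S i x)) →
      ∫ x, min (ds (1/6) (3/4) (S i x)) (ds (5/6) (3/4) (S i x)) ∂P
        = 3/72 + 2/3 * (ox i - c) * (1/2) + (ox i - c)^2 + 7/96 + 2/3 * (oy i - 3/4) * (3/4)
          + (oy i - 3/4)^2 := by
    intro i c h
    have h1 : ∫ x, min (ds (1/6) (3/4) (S i x)) (ds (5/6) (3/4) (S i x)) ∂P
        = ∫ x, poly ((ox i - c)^2 + (oy i - 3/4)^2) (2/3 * (ox i - c)) (2/3 * (oy i - 3/4))
            (1/9) (1/9) 0 x ∂P := by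
      refine integral_congr_ae ?_
      filter_upwards [ae_unitSq hP] with x hx
      rw [h x hx]
      simp only [ds, S_zero, S_one, poly]; ring
    rw [h1, int_poly' hP]; ring
  rw [key 0 (1/6), key 1 (5/6), key 2 (1/6), key 3 (5/6)]
  · simp [ox, oy]; norm_num
  · intro x hx
    have := (hx 0).1
    refine min_eq_right ?_
    simp only [ds, S_zero, ox]; simp; nlinarith
  · intro x hx
    have := (hx 0).2
    refine min_eq_left ?_
    simp only [ds, S_zero, ox]; simp; nlinarith
  · intro x hx
    have := (hx 0).1
    refine min_eq_right ?_
    simp only [ds, S_zero, ox]; simp; nlinarith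
  · intro x hx
    have := (hx 0).2
    refine min_eq_left ?_
    simp only [ds, S_zero, ox]; simp; nlinarith

/-- Steep directions: distance to the line through the two points. -/
lemma steep {P : Measure E2} [IsProbabilityMeasure P] (hP : carpetEq P) (a0 a1 b0 b1 : ℝ)
    (h : (a0 - b0)^2 ≤ (a1 - b1)^2) :
    31/288 ≤ ∫ x, min (ds a0 a1 x) (ds b0 b1 x) ∂P := by
  set D0 := a0 - b0 with hD0
  set D1 := a1 - b1 with hD1
  rcases eq_or_lt_of_le (add_nonneg (sq_nonneg D0) (sq_nonneg D1)) with h0 | hpos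
  · have e1 : D1 = 0 := by
      have : D1^2 = 0 := by nlinarith [sq_nonneg D0, sq_nonneg D1]
      exact pow_eq_zero_iff (two_ne_zero) |>.1 this
    have e0 : D0 = 0 := by
      have : D0^2 = 0 := by nlinarith [sq_nonneg D0, sq_nonneg D1]
      exact pow_eq_zero_iff (two_ne_zero) |>.1 this
    have ha0 : a0 = b0 := by linarith
    have ha1 : a1 = b1 := by linarith
    subst ha0 ha1
    simp only [min_self]
    have e : ds a0 a1 = poly (a0^2 + a1^2) (-2*a0) (-2*a1) 1 1 0 := by
      funext x; simp only [ds, poly]; ring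
    rw [e, int_poly' hP]
    nlinarith [sq_nonneg (a0 - 1/2), sq_nonneg (a1 - 3/4)]
  · set k := a1 * D0 - a0 * D1 with hk
    have e : ∀ x : E2, (D1 * x 0 - D0 * x 1 + k)^2 =
        poly (k^2) (2*D1*k) (-2*D0*k) (D1^2) (D0^2) (-2*D0*D1) x := by
      intro x; simp only [poly]; ring
    have pw : ∀ x : E2, poly (k^2) (2*D1*k) (-2*D0*k) (D1^2) (D0^2) (-2*D0*D1) x
        ≤ (D0^2 + D1^2) * min (ds a0 a1 x) (ds b0 b1 x) := by
      intro x
      rw [← e, mul_min_of_nonneg _ _ hpos.le]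
      refine le_min ?_ ?_
      · have : D1 * x 0 - D0 * x 1 + k = D1 * (x 0 - a0) - D0 * (x 1 - a1) := by rw [hk]; ring
        rw [this, ds]
        nlinarith [sq_nonneg (D0 * (x 0 - a0) + D1 * (x 1 - a1))]
      · have : D1 * x 0 - D0 * x 1 + k = D1 * (x 0 - b0) - D0 * (x 1 - b1) := by
          rw [hk, hD0, hD1]; ring
        rw [this, ds]
        nlinarith [sq_nonneg (D0 * (x 0 - b0) + D1 * (x 1 - b1))]
    have hmono := integral_mono ((Good.poly _ _ _ _ _ _).integrable hP)
      (((Good.const _).mul ((Good.ds a0 a1).min (Good.ds b0 b1))).integrable hP) pw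
    rw [int_poly' hP, integral_const_mul] at hmono
    have : (D0^2 + D1^2) * (31/288) ≤ (D0^2 + D1^2) * ∫ x, min (ds a0 a1 x) (ds b0 b1 x) ∂P := by
      refine le_trans ?_ hmono
      nlinarith [sq_nonneg (k + D1/2 - 3*D0/4)]
    exact le_of_mul_le_mul_left this hpos

lemma cell_bounds {P : Measure E2} [IsProbabilityMeasure P] (hP : carpetEq P) {w : E2 → ℝ}
    (hw : Good w) (h0 : ∀ x, 0 ≤ w x) (h1 : ∀ x, w x ≤ 1) (k : Fin 2) (e : ℝ) :
    ∫ x, w x * (x k / 3 + e) ∂P ≤ (1/3 + e) * ∫ x, w x ∂P ∧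
    ∫ x, w x * (x k / 3 + e) ∂P ≤ (∫ x, x k ∂P) / 3 + e * ∫ x, w x ∂P := by
  have hl : Good fun x : E2 => x k / 3 + e := by
    simpa only [div_eq_mul_inv] using ((Good.coord k).mul (Good.const (3⁻¹))).add (Good.const e)
  have hi := (hw.mul hl).integrable hP
  constructor
  · rw [← integral_const_mul]
    refine integral_mono_ae hi (((Good.const _).mul hw).integrable hP) ?_
    filter_upwards [ae_unitSq hP] with x hx
    have := (hx k).2
    nlinarith [h0 x]
  · have : (∫ x, x k ∂P) / 3 + e * ∫ x, w x ∂P = ∫ x, ((1/3) * x k + e * w x) ∂P := by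
      rw [integral_add (((Good.const _).mul (Good.coord k)).integrable hP)
        (((Good.const _).mul hw).integrable hP), integral_const_mul, integral_const_mul]
      ring
    rw [this]
    refine integral_mono_ae hi
      ((((Good.const _).mul (Good.coord k)).add ((Good.const _).mul hw)).integrable hP) ?_
    filter_upwards [ae_unitSq hP] with x hx
    have := (hx k).1
    nlinarith [h1 x]

set_option maxHeartbeats 1000000 in
/-- Flat directions with nonnegative components. -/
lemma flat {P : Measure E2} [IsProbabilityMeasure P] (hP : carpetEq P) (a0 a1 b0 b1 : ℝ)
    (hD1 : 0 ≤ a1 - b1) (hD : a1 - b1 ≤ a0 - b0) :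
    31/288 ≤ ∫ x, min (ds a0 a1 x) (ds b0 b1 x) ∂P := by
  classical
  obtain ⟨D0, hD0e⟩ : ∃ D0, D0 = a0 - b0 := ⟨_, rfl⟩
  obtain ⟨D1, hD1e⟩ : ∃ D1, D1 = a1 - b1 := ⟨_, rfl⟩
  rw [← hD1e] at hD1 hD
  rw [← hD0e] at hD
  obtain ⟨τ, hτ⟩ : ∃ τ, τ = (a0^2 + a1^2 - b0^2 - b1^2) / 2 := ⟨_, rfl⟩
  let w : E2 → ℝ := fun x => if τ ≤ D0 * x 0 + D1 * x 1 then 1 else 0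
  have hw0 : ∀ x, 0 ≤ w x := fun x => by simp only [w]; split_ifs <;> norm_num
  have hw1 : ∀ x, w x ≤ 1 := fun x => by simp only [w]; split_ifs <;> norm_num
  have hwm : Measurable w := by
    refine Measurable.ite ?_ measurable_const measurable_const
    exact measurableSet_le measurable_const
      (((coord_meas 0).const_mul D0).add ((coord_meas 1).const_mul D1))
  have hw : Good w := ⟨hwm, 1, fun x _ => by rw [abs_of_nonneg (hw0 x)]; exact hw1 x⟩
  -- the pointwise identity
  have pw : ∀ x, min (ds a0 a1 x) (ds b0 b1 x) =
      ds b0 b1 x + (-2 * D0) * (w x * (x 0 - 1/2)) + (-2 * D1) * (w x * (x 1 - 3/4))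
        + ((a0 - 1/2)^2 + (a1 - 3/4)^2 - (b0 - 1/2)^2 - (b1 - 3/4)^2) * w x := by
    intro x
    simp only [w]
    split_ifs with h
    · rw [min_eq_left]
      · simp only [ds, hD0e, hD1e]; ring
      · simp only [ds]; rw [hτ, hD0e, hD1e] at h; nlinarith
    · rw [min_eq_right]
      · ring
      · simp only [ds]; rw [hτ, hD0e, hD1e] at h; nlinarith
  have gU : Good fun x => w x * (x 0 - 1/2) := hw.mul ((Good.coord 0).sub (Good.const _))
  have gT : Good fun x => w x * (x 1 - 3/4) := hw.mul ((Good.coord 1).sub (Good.const _))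
  obtain ⟨p, hp⟩ : ∃ p, p = ∫ x, w x ∂P := ⟨_, rfl⟩
  obtain ⟨U, hU⟩ : ∃ U, U = ∫ x, w x * (x 0 - 1/2) ∂P := ⟨_, rfl⟩
  obtain ⟨T, hT⟩ : ∃ T, T = ∫ x, w x * (x 1 - 3/4) ∂P := ⟨_, rfl⟩
  have hb : ∫ x, ds b0 b1 x ∂P = 7/32 + (b0 - 1/2)^2 + (b1 - 3/4)^2 := by
    have e : ds b0 b1 = poly (b0^2 + b1^2) (-2*b0) (-2*b1) 1 1 0 := by
      funext x; simp only [ds, poly]; ring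
    rw [e, int_poly' hP]; ring
  have hcost : ∫ x, min (ds a0 a1 x) (ds b0 b1 x) ∂P = 7/32 + (b0 - 1/2)^2 + (b1 - 3/4)^2
      + (-2 * D0) * U + (-2 * D1) * T
        + ((a0 - 1/2)^2 + (a1 - 3/4)^2 - (b0 - 1/2)^2 - (b1 - 3/4)^2) * p := by
    simp only [pw]
    rw [integral_add ((((Good.ds _ _).add ((Good.const _).mul gU)).add
        ((Good.const _).mul gT)).integrable hP) (((Good.const _).mul hw).integrable hP),
      integral_add (((Good.ds _ _).add ((Good.const _).mul gU)).integrable hP)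
        (((Good.const _).mul gT).integrable hP),
      integral_add ((Good.ds _ _).integrable hP) (((Good.const _).mul gU).integrable hP)]
    simp only [integral_const_mul]
    rw [hb, ← hU, ← hT, ← hp]
  -- it is enough to bound the between-cluster term
  suffices hB : ∃ U' T', U ≤ U' ∧ T ≤ T' ∧ U'^2 + T'^2 ≤ p * (1 - p) / 9 by
    obtain ⟨U', T', hU', hT', hq⟩ := hB
    have hq0 : 0 ≤ p * (1 - p) := by nlinarith [sq_nonneg U', sq_nonneg T']
    have h1 := two_le_of_sq (D0 := D0) (D1 := D1) hq0 hq
    have h2 : D0 * U ≤ D0 * U' := mul_le_mul_of_nonneg_left hU' (by linarith)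
    have h3 : D1 * T ≤ D1 * T' := mul_le_mul_of_nonneg_left hT' hD1
    rw [hcost]
    have h4 : p * (1 - p) * (D0^2 + D1^2) ≤
        p * ((a0 - 1/2)^2 + (a1 - 3/4)^2) + (1 - p) * ((b0 - 1/2)^2 + (b1 - 3/4)^2) := by
      rw [hD0e, hD1e]
      nlinarith [sq_nonneg (p * (a0 - 1/2) + (1 - p) * (b0 - 1/2)),
        sq_nonneg (p * (a1 - 3/4) + (1 - p) * (b1 - 3/4))]
    linarith
  -- cell quantities
  obtain ⟨W, hW⟩ : ∃ W : Fin 4 → ℝ, W = fun i => ∫ x, w (S i x) ∂P := ⟨_, rfl⟩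
  have hW0 : ∀ i, 0 ≤ W i := fun i => by rw [hW]; exact integral_nonneg fun x => hw0 _
  have hW1 : ∀ i, W i ≤ 1 := fun i => by
    rw [hW]
    have := integral_mono ((hw.comp_S i).integrable hP) ((Good.const 1).integrable hP)
      (fun x => hw1 (S i x))
    simpa using this
  have bX : ∀ i, ∫ x, w (S i x) * (S i x 0 - 1/2) ∂P ≤ (1/3 + (ox i - 1/2)) * W i ∧
      ∫ x, w (S i x) * (S i x 0 - 1/2) ∂P ≤ 1/6 + (ox i - 1/2) * W i := by
    intro i
    have h := cell_bounds hP (hw.comp_S i) (fun x => hw0 _) (fun x => hw1 _) 0 (ox i - 1/2)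
    rw [mean0 hP] at h
    have e : ∀ x : E2, S i x 0 - 1/2 = x 0 / 3 + (ox i - 1/2) := fun x => by rw [S_zero]; ring
    simp only [e, hW]
    refine ⟨h.1, h.2.trans (le_of_eq (by ring))⟩
  have bY : ∀ i, ∫ x, w (S i x) * (S i x 1 - 3/4) ∂P ≤ (1/3 + (oy i - 3/4)) * W i ∧
      ∫ x, w (S i x) * (S i x 1 - 3/4) ∂P ≤ 1/4 + (oy i - 3/4) * W i := by
    intro i
    have h := cell_bounds hP (hw.comp_S i) (fun x => hw0 _) (fun x => hw1 _) 1 (oy i - 3/4)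
    rw [mean1 hP] at h
    have e : ∀ x : E2, S i x 1 - 3/4 = x 1 / 3 + (oy i - 3/4) := fun x => by rw [S_one]; ring
    simp only [e, hW]
    refine ⟨h.1, h.2.trans (le_of_eq (by ring))⟩
  have hpW : p = 1/8 * W 0 + 1/8 * W 1 + 3/8 * W 2 + 3/8 * W 3 := by
    rw [hp, carpet_integral hP hw, hW]
  have hUW : U ≤ 1/8 * uL (W 0) + 1/8 * uR (W 1) + 3/8 * uL (W 2) + 3/8 * uR (W 3) := by
    rw [hU, carpet_integral hP gU]
    have c0 : ∫ x, w (S 0 x) * (S 0 x 0 - 1/2) ∂P ≤ uL (W 0) := by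
      have h := bX 0
      rw [show ox 0 = 0 from rfl] at h
      exact le_min (by linarith [h.1]) (by linarith [h.2])
    have c1 : ∫ x, w (S 1 x) * (S 1 x 0 - 1/2) ∂P ≤ uR (W 1) := by
      have h := bX 1
      rw [show ox 1 = 2/3 from rfl] at h
      exact le_min (by linarith [h.1]) (by linarith [h.2])
    have c2 : ∫ x, w (S 2 x) * (S 2 x 0 - 1/2) ∂P ≤ uL (W 2) := by
      have h := bX 2
      rw [show ox 2 = 0 from rfl] at h
      exact le_min (by linarith [h.1]) (by linarith [h.2])
    have c3 : ∫ x, w (S 3 x) * (S 3 x 0 - 1/2) ∂P ≤ uR (W 3) := by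
      have h := bX 3
      rw [show ox 3 = 2/3 from rfl] at h
      exact le_min (by linarith [h.1]) (by linarith [h.2])
    linarith
  have hTW : T ≤ 1/8 * tB (W 0) + 1/8 * tB (W 1) + 3/8 * tT (W 2) + 3/8 * tT (W 3) := by
    rw [hT, carpet_integral hP gT]
    have c0 : ∫ x, w (S 0 x) * (S 0 x 1 - 3/4) ∂P ≤ tB (W 0) := by
      have h := bY 0
      rw [show oy 0 = 0 from rfl] at h
      exact le_min (by linarith [h.1]) (by linarith [h.2])
    have c1 : ∫ x, w (S 1 x) * (S 1 x 1 - 3/4) ∂P ≤ tB (W 1) := by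
      have h := bY 1
      rw [show oy 1 = 0 from rfl] at h
      exact le_min (by linarith [h.1]) (by linarith [h.2])
    have c2 : ∫ x, w (S 2 x) * (S 2 x 1 - 3/4) ∂P ≤ tT (W 2) := by
      have h := bY 2
      rw [show oy 2 = 2/3 from rfl] at h
      exact le_min (by linarith [h.1]) (by linarith [h.2])
    have c3 : ∫ x, w (S 3 x) * (S 3 x 1 - 3/4) ∂P ≤ tT (W 3) := by
      have h := bY 3
      rw [show oy 3 = 2/3 from rfl] at h
      exact le_min (by linarith [h.1]) (by linarith [h.2])
    linarith
  have hD0 : 0 ≤ D0 := hD1.trans hD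
  -- cells entirely on one side
  have lowcell : ∀ i, D0 * (1/3 + ox i) + D1 * (1/3 + oy i) < τ → W i = 0 := by
    intro i hi
    rw [hW]
    refine integral_eq_zero_of_ae ?_
    filter_upwards [ae_unitSq hP] with x hx
    have hx0 := mul_le_mul_of_nonneg_left (hx 0).2 hD0
    have hx1 := mul_le_mul_of_nonneg_left (hx 1).2 hD1
    simp only [w, S_zero, S_one]
    rw [if_neg]
    · rfl
    · rw [not_le]; linarith
  have highcell : ∀ i, τ ≤ D0 * ox i + D1 * oy i → W i = 1 := by
    intro i hi
    have : W i = ∫ _ : E2, (1:ℝ) ∂P := by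
      rw [hW]
      refine integral_congr_ae ?_
      filter_upwards [ae_unitSq hP] with x hx
      have hx0 := mul_le_mul_of_nonneg_left (hx 0).1 hD0
      have hx1 := mul_le_mul_of_nonneg_left (hx 1).1 hD1
      simp only [w, S_zero, S_one]
      rw [if_pos]
      linarith
    rw [this]; simp
  have vL0 : uL 0 = 0 := by norm_num [uL]
  have vR1 : uR 1 = 1/3 := by norm_num [uR]
  have vB0 : tB 0 = 0 := by norm_num [tB]
  have vT0 : tT 0 = 0 := by norm_num [tT]
  have vB1 : tB 1 = -1/2 := by norm_num [tB]
  have vT1 : tT 1 = 1/6 := by norm_num [tT]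
  refine ⟨_, _, hUW, hTW, ?_⟩
  rw [hpW]
  rcases lt_or_ge (D0 * (2/3) + D1 * (2/3)) τ with h | h
  · have w0 : W 0 = 0 := lowcell 0 (by simp [ox, oy]; linarith)
    have w2 : W 2 = 0 := lowcell 2 (by simp [ox, oy]; linarith)
    rw [w0, w2, vL0, vB0, vT0]
    have := coreC (W 1) (W 3) (hW0 _) (hW1 _) (hW0 _) (hW1 _)
    refine le_of_eq_of_le ?_ (this.trans_eq ?_) <;> ring
  · have w3 : W 3 = 1 := highcell 3 (by simp [ox, oy]; linarith)
    rcases lt_or_ge (D0 * (2/3)) τ with h' | h'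
    · have w0 : W 0 = 0 := lowcell 0 (by simp [ox, oy]; linarith)
      rw [w0, w3, vL0, vB0, vR1, vT1]
      have := coreA (W 1) (W 2) (hW0 _) (hW1 _) (hW0 _) (hW1 _)
      refine le_of_eq_of_le ?_ (this.trans_eq ?_) <;> ring
    · have w1 : W 1 = 1 := highcell 1 (by simp [ox, oy]; linarith)
      rw [w1, w3, vR1, vT1, vB1]
      have := coreB (W 0) (W 2) (hW0 _) (hW1 _) (hW0 _) (hW1 _)
      refine le_of_eq_of_le ?_ (this.trans_eq ?_) <;> ring

/-- Reflection in the vertical axis of symmetry. -/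
def refl0 (x : E2) : E2 := pt (1 - x 0) (x 1)

lemma meas_refl0 : Measurable refl0 :=
  (continuous_pt (by fun_prop) (by fun_prop)).measurable

lemma carpetEq_refl {P : Measure E2} (hP : carpetEq P) : carpetEq (P.map refl0) := by
  have c : ∀ i j, (∀ x, refl0 (S i x) = S j (refl0 x)) →
      (P.map (S i)).map refl0 = (P.map refl0).map (S j) := by
    intro i j h
    rw [Measure.map_map meas_refl0 (meas_S i), Measure.map_map (meas_S j) meas_refl0]
    congr 1
    funext x
    exact h x
  unfold carpetEq
  conv_lhs => rw [hP]
  rw [Measure.map_add _ _ meas_refl0, Measure.map_add _ _ meas_refl0, Measure.map_add _ _ meas_refl0]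
  simp only [Measure.map_smul]
  rw [c 0 1, c 1 0, c 2 3, c 3 2]
  · ac_rfl
  all_goals
    intro x
    simp only [S, refl0, pt_zero, pt_one]
    congr 1
    ring

lemma two_points {P : Measure E2} [IsProbabilityMeasure P] (hP : carpetEq P) (a0 a1 b0 b1 : ℝ) :
    31/288 ≤ ∫ x, min (ds a0 a1 x) (ds b0 b1 x) ∂P := by
  wlog h1 : 0 ≤ a1 - b1 generalizing a0 a1 b0 b1
  · have := this b0 b1 a0 a1 (by linarith)
    simpa only [min_comm] using this
  rcases le_total ((a0 - b0)^2) ((a1 - b1)^2) with h | h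
  · exact steep hP _ _ _ _ h
  · rw [sq_le_sq, abs_of_nonneg h1] at h
    rcases le_total 0 (a0 - b0) with h0 | h0
    · rw [abs_of_nonneg h0] at h
      exact flat hP _ _ _ _ h1 h
    · rw [abs_of_nonpos h0] at h
      have : IsProbabilityMeasure (P.map refl0) :=
        Measure.isProbabilityMeasure_map meas_refl0.aemeasurable
      have hfl := flat (carpetEq_refl hP) (1 - a0) a1 (1 - b0) b1 h1 (by linarith)
      rw [integral_map meas_refl0.aemeasurable
        ((Good.ds _ _).min (Good.ds _ _)).1.aestronglyMeasurable] at hfl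
      have e : ∀ c0 c1 x, ds (1 - c0) c1 (refl0 x) = ds c0 c1 x := by
        intro c0 c1 x; simp only [ds, refl0, pt_zero, pt_one]; ring
      simpa only [e] using hfl

theorem optimal_two_means (P : Measure E2) [IsProbabilityMeasure P] (hP : carpetEq P) :
    (∫ x : E2, min (‖x - pt (1/6) (3/4)‖^2) (‖x - pt (5/6) (3/4)‖^2) ∂P = 31/288)
    ∧ ∀ (β : Finset E2) (hβ : β.Nonempty), β.card ≤ 2 →
        31/288 ≤ ∫ x : E2, β.inf' hβ (fun c => ‖x - c‖^2) ∂P := by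
  constructor
  · simp only [norm_ds, pt_zero, pt_one]
    exact value_eq hP
  · intro β hβ hc
    obtain ⟨a, b, hab⟩ : ∃ a b : E2, β = {a, b} := by
      have h1 : 1 ≤ β.card := hβ.card_pos
      rcases Nat.lt_or_ge β.card 2 with h | h
      · obtain ⟨a, ha⟩ := Finset.card_eq_one.1 (by omega : β.card = 1)
        exact ⟨a, a, by simp [ha]⟩
      · obtain ⟨a, b, -, hab⟩ := Finset.card_eq_two.1 (by omega : β.card = 2)
        exact ⟨a, b, hab⟩
    subst hab
    have e : ∀ x : E2, ({a, b} : Finset E2).inf' hβ (fun c => ‖x - c‖^2)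
        = min (ds (a 0) (a 1) x) (ds (b 0) (b 1) x) := by
      intro x
      rw [Finset.inf'_insert (Finset.singleton_nonempty b)]
      simp only [Finset.inf'_singleton, norm_ds]
    simp only [e]
    exact two_points hP _ _ _ _
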